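/- Semigroup property of the Weyl fractional integral on Schwartz functions: for 0 < α < 1 and f Schwartz, (D_right)^α (W_α f)(x) = f(x) for all x, where W_α f(x) = (1/Γ(α)) ∫_x^∞ f(t) (t-x)^{α-1} dt. -/

import Mathlib

open Real MeasureTheory

/-- `(D_right)^α u(x) = (1/Γ(-α)) ∫_x^∞ (u(t) - u(x))(t-x)^{-(1+α)} dt`. -/
noncomputable def Dright (α : ℝ) (u : ℝ → ℝ) (x : ℝ) : ℝ :=
  (1 / Real.Gamma (-α)) * ∫ t in Set.Ioi x, (u t - u x) / (t - x) ^ (1 + α)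

/-- The Weyl fractional integral `W_α f(x) = (1/Γ(α)) ∫_x^∞ f(t)(t-x)^{α-1} dt`. -/
noncomputable def Weyl (α : ℝ) (f : ℝ → ℝ) (x : ℝ) : ℝ :=
  (1 / Real.Gamma α) * ∫ t in Set.Ioi x, f t * (t - x) ^ (α - 1)

open Set Filter Topology

lemma aux_shift (k : ℝ → ℝ) (x c : ℝ) :
    ∫ t in Ioi (c + x), k t = ∫ s in Ioi c, k (s + x) := by
  have := (measurePreserving_add_right volume x).setIntegral_preimage_emb
    (measurableEmbedding_addRight x) k (Ioi (c + x))
  rw [← this]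
  congr 2
  ext; simp

lemma aux_schwartz_int (F : SchwartzMap ℝ ℝ) {s : ℝ} (hs : 0 < s) :
    IntegrableOn (fun t : ℝ => t ^ (s - 1) * F t) (Ioi 0) := by
  refine mellin_convergent_of_isBigO_scalar (a := s + 1) (b := 0)
    (F.continuous.locallyIntegrable.locallyIntegrableOn _) ?_ (by linarith) ?_ hs
  · have h := (F.isBigO_cocompact_rpow (-(s+1))).mono (atTop_le_cocompact (α := ℝ))
    refine h.trans (Asymptotics.IsBigO.of_bound 1 ?_)
    filter_upwards [eventually_ge_atTop (0:ℝ)] with t ht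
    simp [abs_of_nonneg ht]
  · simp only [neg_zero, Real.rpow_zero]
    exact (F.continuous.tendsto 0).mono_left nhdsWithin_le_nhds |>.isBigO_one ℝ

lemma aux_parts (F : SchwartzMap ℝ ℝ) {α : ℝ} (hα : 0 < α) :
    ∫ t in Ioi (0:ℝ), F t * t ^ (α - 1) = -(1 / α) * ∫ t in Ioi (0:ℝ), deriv F t * t ^ α := by
  have hG := aux_schwartz_int (SchwartzMap.derivCLM ℝ ℝ F) (s := α + 1) (by linarith)
  simp only [add_sub_cancel_right, SchwartzMap.derivCLM_apply] at hG
  have hF := aux_schwartz_int F hα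
  have h := integral_Ioi_mul_deriv_eq_deriv_mul (a := (0:ℝ)) (u := F) (v := fun t => t ^ α / α)
    (u' := deriv F) (v' := fun t => t ^ (α - 1)) (a' := 0) (b' := 0)
    (fun t _ => F.hasDerivAt t) ?_ ?_ ?_ ?_ ?_
  · rw [h, ← integral_const_mul, sub_zero, zero_sub, ← integral_neg]
    congr 1; ext t; ring
  · intro t ht
    have := (hasDerivAt_rpow_const (x := t) (p := α) (Or.inl (ne_of_gt ht))).div_const α
    convert this using 1
    field_simp
  · exact hF.congr_fun (fun t _ => by simp [mul_comm]) measurableSet_Ioi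
  · exact IntegrableOn.congr_fun (hG.div_const α) (fun t _ => by simp; ring) measurableSet_Ioi
  · have : Continuous (fun t : ℝ => F t * (t ^ α / α)) :=
      F.continuous.mul ((Real.continuous_rpow_const hα.le).div_const α)
    have h0 := this.tendsto 0
    simp only [Real.zero_rpow hα.ne', zero_div, mul_zero] at h0
    exact h0.mono_left nhdsWithin_le_nhds
  · have h1 := (F.isBigO_cocompact_rpow (-(α+1))).mono (atTop_le_cocompact (α := ℝ))
    have h2 : (⇑F * fun t : ℝ => t ^ α / α) =O[atTop] (fun t : ℝ => t ^ (-1:ℝ)) := by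
      have h3 := h1.mul (Asymptotics.isBigO_refl (fun t : ℝ => t ^ α / α) atTop)
      refine h3.trans (Asymptotics.IsBigO.of_bound (1/α) ?_)
      filter_upwards [eventually_gt_atTop (0:ℝ)] with t ht
      have : ‖t‖ ^ (-(α+1)) * (t ^ α / α) = 1 / α * t ^ (-1:ℝ) := by
        rw [Real.norm_of_nonneg ht.le, ← mul_div_assoc, ← Real.rpow_add ht]
        ring_nf
      rw [this, norm_mul, Real.norm_of_nonneg (by positivity : 0 ≤ 1/α)]
    exact h2.trans_tendsto (tendsto_rpow_neg_atTop one_pos)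

/-- kernel -/
noncomputable def auxK (α w h : ℝ) : ℝ := (w ^ α - (max (w - h) 0) ^ α) / h ^ (1 + α)

lemma auxK_nonneg {α w h : ℝ} (hα : 0 < α) (hw : 0 ≤ w) (hh : 0 < h) : 0 ≤ auxK α w h := by
  unfold auxK
  refine div_nonneg (sub_nonneg.2 ?_) (by positivity)
  exact Real.rpow_le_rpow (le_max_right _ _) (max_le (by linarith) hw) hα.le

lemma auxK_scale {α w h : ℝ} (hw : 0 < w) (hh : 0 < h) :
    auxK α w (w * h) = w⁻¹ * auxK α 1 h := by
  unfold auxK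
  have : max (w - w * h) 0 = w * max (1 - h) 0 := by
    rw [mul_max_of_nonneg _ _ hw.le]; ring_nf
  rw [this, Real.mul_rpow hw.le (le_max_right _ _), Real.mul_rpow hw.le hh.le,
    Real.rpow_add hw, Real.rpow_one, Real.one_rpow]
  have := (Real.rpow_pos_of_pos hw α).ne'
  have := (Real.rpow_pos_of_pos hh (1+α)).ne'
  field_simp

lemma aux_beta {α : ℝ} (hα : 0 < α) (hα1 : α < 1) :
    IntervalIntegrable (fun h : ℝ => h ^ (-α) * (1 - h) ^ (α - 1)) volume 0 1 ∧
    ∫ h in (0:ℝ)..1, h ^ (-α) * (1 - h) ^ (α - 1) = Real.Gamma (1 - α) * Real.Gamma α := by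
  have hc := Complex.betaIntegral_convergent (u := ((1 - α : ℝ) : ℂ)) (v := (α : ℂ))
    (by simpa using hα1) (by simpa)
  have hI : IntegrableOn (fun x : ℝ => (x : ℂ) ^ (((1 - α : ℝ) : ℂ) - 1)
      * (1 - (x:ℂ)) ^ ((α:ℂ) - 1)) (Ioc 0 1) :=
    (intervalIntegrable_iff_integrableOn_Ioc_of_le (by simp)).1 hc
  have he : EqOn (fun x : ℝ => RCLike.re ((x : ℂ) ^ (((1 - α : ℝ) : ℂ) - 1)
      * (1 - (x:ℂ)) ^ ((α:ℂ) - 1))) (fun h : ℝ => h ^ (-α) * (1 - h) ^ (α - 1)) (Ioc 0 1) := by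
    intro x hx
    have h1 : 0 ≤ 1 - x := by linarith [hx.2]
    have : (x : ℂ) ^ (((1 - α : ℝ) : ℂ) - 1) * (1 - (x:ℂ)) ^ ((α:ℂ) - 1)
        = ((x ^ (-α) * (1 - x) ^ (α - 1) : ℝ) : ℂ) := by
      rw [Complex.ofReal_mul, Complex.ofReal_cpow hx.1.le, Complex.ofReal_cpow h1]
      push_cast
      ring_nf
    simp only [this]
    exact Complex.ofReal_re _
  constructor
  · rw [intervalIntegrable_iff_integrableOn_Ioc_of_le (by simp)]
    exact IntegrableOn.congr_fun hI.re he measurableSet_Ioc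
  · have hb := ProbabilityTheory.beta_eq_betaIntegralReal (1 - α) α (by linarith) hα
    rw [ProbabilityTheory.beta, sub_add_cancel, Real.Gamma_one, div_one] at hb
    rw [hb, Complex.betaIntegral, intervalIntegral.integral_of_le zero_le_one,
      intervalIntegral.integral_of_le zero_le_one, ← RCLike.re_to_complex, ← integral_re hI]
    exact (setIntegral_congr_fun measurableSet_Ioc he).symm

lemma auxK_meas (α : ℝ) : Measurable (Function.uncurry (auxK α)) := by
  unfold auxK Function.uncurry
  fun_prop

lemma auxK_one {α : ℝ} (hα : 0 < α) (hα1 : α < 1) :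
    IntegrableOn (auxK α 1) (Ioi 0) ∧
    ∫ h in Ioi (0:ℝ), auxK α 1 h = Real.Gamma (1 - α) * Real.Gamma α := by
  obtain ⟨hbi, hb⟩ := aux_beta hα hα1
  have hm : Measurable (auxK α 1) := (auxK_meas α).comp measurable_prodMk_left
  have e1 : EqOn (fun h : ℝ => h ^ (-(1 + α))) (auxK α 1) (Ioi 1) := by
    intro h hh
    have hh' : (1:ℝ) < h := hh
    simp only [auxK]
    rw [max_eq_right (by linarith), Real.zero_rpow hα.ne', Real.one_rpow, sub_zero,
      Real.rpow_neg (by linarith), one_div]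
  have i1 : IntegrableOn (auxK α 1) (Ioi 1) :=
    (integrableOn_Ioi_rpow_of_lt (by linarith) one_pos).congr_fun e1 measurableSet_Ioi
  have v1 : ∫ h in Ioi (1:ℝ), auxK α 1 h = 1 / α := by
    rw [← setIntegral_congr_fun measurableSet_Ioi e1,
      integral_Ioi_rpow_of_lt (by linarith) one_pos, Real.one_rpow,
      show -(1 + α) + 1 = -α by ring, neg_div_neg_eq]
  have bd : ∀ h ∈ Ioc (0:ℝ) 1, 1 - (1 - h) ^ α ≤ h := by
    intro h hh
    have := Real.rpow_le_rpow_of_exponent_ge' (x := 1 - h) (y := 1) (z := α)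
      (by linarith [hh.2]) (by linarith [hh.1]) hα.le hα1.le
    rw [Real.rpow_one] at this
    linarith
  have e2 : ∀ h ∈ Ioc (0:ℝ) 1, auxK α 1 h = (1 - (1 - h) ^ α) * h ^ (-(1 + α)) := by
    intro h hh
    simp only [auxK]
    rw [max_eq_left (by linarith [hh.2]), Real.one_rpow, Real.rpow_neg hh.1.le, div_eq_mul_inv]
  have pw : ∀ h : ℝ, 0 < h → h * h ^ (-(1 + α)) = h ^ (-α) := by
    intro h hh
    nth_rewrite 1 [← Real.rpow_one h]
    rw [← Real.rpow_add hh]; ring_nf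
  have i2 : IntegrableOn (auxK α 1) (Ioc 0 1) := by
    have hi : IntervalIntegrable (fun h : ℝ => h ^ (-α)) volume 0 1 :=
      intervalIntegral.intervalIntegrable_rpow' (by linarith)
    rw [intervalIntegrable_iff_integrableOn_Ioc_of_le (by simp)] at hi
    refine Integrable.mono' hi hm.aestronglyMeasurable ?_
    refine ae_restrict_of_forall_mem measurableSet_Ioc fun h hh => ?_
    rw [Real.norm_of_nonneg (auxK_nonneg hα zero_le_one hh.1), e2 h hh, ← pw h hh.1]
    exact mul_le_mul_of_nonneg_right (bd h hh) (Real.rpow_nonneg hh.1.le _)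
  have i2' : IntervalIntegrable (auxK α 1) volume 0 1 := by
    rwa [intervalIntegrable_iff_integrableOn_Ioc_of_le (by simp)]
  have v2 : ∫ h in (0:ℝ)..1, (auxK α 1 h - h ^ (-α) * (1 - h) ^ (α - 1)) = -(1 / α) - 0 := by
    refine intervalIntegral.integral_eq_sub_of_hasDerivAt_of_tendsto
      (f := fun h => -(1 / α) * ((1 - (1 - h) ^ α) * h ^ (-α))) one_pos ?_ (i2'.sub hbi) ?_ ?_
    · intro h hh
      have d1 : HasDerivAt (fun h : ℝ => (1 - h) ^ α) (-1 * α * (1 - h) ^ (α - 1)) h :=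
        ((hasDerivAt_id h).const_sub 1).rpow_const (Or.inl (by simp; linarith [hh.2]))
      have d2 := hasDerivAt_rpow_const (x := h) (p := -α) (Or.inl hh.1.ne')
      have := ((d1.const_sub 1).mul d2).const_mul (-(1 / α))
      refine this.congr_deriv ?_
      rw [e2 h ⟨hh.1, hh.2.le⟩, show -α - 1 = -(1 + α) by ring]
      field_simp
      ring
    · have h0 : Tendsto (fun h : ℝ => h ^ (1 - α)) (𝓝[>] 0) (𝓝 0) := by
        have := (Real.continuous_rpow_const (q := 1 - α) (by linarith)).tendsto 0
        rw [Real.zero_rpow (by linarith)] at this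
        exact this.mono_left nhdsWithin_le_nhds
      have : Tendsto (fun h : ℝ => (1 - (1 - h) ^ α) * h ^ (-α)) (𝓝[>] 0) (𝓝 0) := by
        refine squeeze_zero' ?_ ?_ h0
        · filter_upwards [Ioc_mem_nhdsGT (zero_lt_one' ℝ)] with h hh
          refine mul_nonneg (sub_nonneg.2 ?_) (Real.rpow_nonneg hh.1.le _)
          exact Real.rpow_le_one (by linarith [hh.2]) (by linarith [hh.1]) hα.le
        · filter_upwards [Ioc_mem_nhdsGT (zero_lt_one' ℝ)] with h hh
          rw [sub_eq_add_neg 1 α, Real.rpow_add hh.1, Real.rpow_one]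
          exact mul_le_mul_of_nonneg_right (bd h hh) (Real.rpow_nonneg hh.1.le _)
      simpa using this.const_mul (-(1 / α))
    · have : ContinuousAt (fun h : ℝ => -(1 / α) * ((1 - (1 - h) ^ α) * h ^ (-α))) 1 := by
        have c1 : Continuous (fun h : ℝ => (1 - h) ^ α) :=
          (Real.continuous_rpow_const hα.le).comp (continuous_const.sub continuous_id)
        have c2 : ContinuousAt (fun h : ℝ => h ^ (-α)) 1 :=
          Real.continuousAt_rpow_const _ _ (Or.inl one_ne_zero)
        exact continuousAt_const.mul ((continuousAt_const.sub c1.continuousAt).mul c2)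
      have h1 := this.tendsto
      simp only [sub_self, Real.zero_rpow hα.ne', sub_zero, Real.one_rpow, mul_one] at h1
      exact h1.mono_left nhdsWithin_le_nhds
  rw [intervalIntegral.integral_sub i2' hbi, hb, intervalIntegral.integral_of_le zero_le_one] at v2
  have hun : Ioi (0:ℝ) = Ioc 0 1 ∪ Ioi 1 := (Ioc_union_Ioi_eq_Ioi zero_le_one).symm
  constructor
  · rw [hun]; exact i2.union i1
  · rw [hun, setIntegral_union (Ioc_disjoint_Ioi le_rfl) measurableSet_Ioi i2 i1, v1]
    linarith

lemma auxK_int {α w : ℝ} (hα : 0 < α) (hα1 : α < 1) (hw : 0 < w) :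
    IntegrableOn (auxK α w) (Ioi 0) ∧
    ∫ h in Ioi (0:ℝ), auxK α w h = Real.Gamma (1 - α) * Real.Gamma α := by
  obtain ⟨hi, hv⟩ := auxK_one hα hα1
  have e : EqOn (fun h => w⁻¹ * auxK α 1 h) (fun h => auxK α w (w * h)) (Ioi 0) :=
    fun h hh => (auxK_scale hw hh).symm
  constructor
  · have := (integrableOn_Ioi_comp_mul_left_iff (auxK α w) 0 hw).1
      (IntegrableOn.congr_fun (hi.const_mul w⁻¹) e measurableSet_Ioi)
    simpa using this
  · have h1 := integral_comp_mul_left_Ioi (auxK α w) 0 hw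
    rw [← setIntegral_congr_fun measurableSet_Ioi e, integral_const_mul, hv, mul_zero,
      smul_eq_mul] at h1
    exact (mul_left_cancel₀ (inv_ne_zero hw.ne') h1).symm

lemma aux_Weyl (α : ℝ) (hα : 0 < α) (f : SchwartzMap ℝ ℝ) (x h : ℝ) (hh : 0 ≤ h) :
    Weyl α (fun y => f y) (h + x) = (1 / Real.Gamma α) * (-(1 / α) *
      ∫ w in Ioi (0:ℝ), deriv f (w + x) * (max (w - h) 0) ^ α) := by
  unfold Weyl
  congr 1
  have h0 := aux_shift (fun t => f t * (t - (h + x)) ^ (α - 1)) (h + x) 0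
  rw [zero_add] at h0
  rw [h0]
  have hp := aux_parts (f.compSubConstCLM ℝ (-(h + x))) hα
  simp only [SchwartzMap.compSubConstCLM_apply, sub_neg_eq_add] at hp
  simp only [add_sub_cancel_right]
  rw [hp]
  congr 1
  have hd : ∀ t, deriv (f.compSubConstCLM ℝ (-(h + x))) t = deriv f (t + (h + x)) := by
    intro t
    have : ⇑(f.compSubConstCLM ℝ (-(h + x))) = fun t => f (t + (h + x)) := by
      ext t; simp only [SchwartzMap.compSubConstCLM_apply, sub_neg_eq_add]
    rw [this, deriv_comp_add_const]
  have h2 := aux_shift (fun w => deriv f (w + x) * (max (w - h) 0) ^ α) h 0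
  have h3 : ∫ w in Ioi (0:ℝ), deriv f (w + x) * (max (w - h) 0) ^ α
      = ∫ w in Ioi h, deriv f (w + x) * (max (w - h) 0) ^ α := by
    refine setIntegral_eq_of_subset_of_forall_sdiff_eq_zero measurableSet_Ioi
      (Ioi_subset_Ioi hh) ?_
    intro w hw
    have : w ≤ h := not_lt.1 hw.2
    rw [max_eq_right (by linarith), Real.zero_rpow hα.ne', mul_zero]
  rw [h3]
  rw [zero_add] at h2
  rw [h2]
  refine setIntegral_congr_fun measurableSet_Ioi fun t ht => ?_
  have ht' : (0:ℝ) < t := ht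
  simp only [hd, add_sub_cancel_right]
  rw [max_eq_left ht'.le, add_assoc]

/-- Fractional fundamental theorem of calculus on the Schwartz class:
`(D_right)^α (W_α f) = f`. -/
theorem Dright_Weyl (α : ℝ) (hα : 0 < α) (hα1 : α < 1) (f : SchwartzMap ℝ ℝ) (x : ℝ) :
    Dright α (Weyl α (fun y => f y)) x = f x := by
  set G : SchwartzMap ℝ ℝ := SchwartzMap.derivCLM ℝ ℝ (f.compSubConstCLM ℝ (-x)) with hG
  have hGd : ∀ w, G w = deriv f (w + x) := by
    intro w
    have : ⇑(f.compSubConstCLM ℝ (-x)) = fun t => f (t + x) := by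
      ext t; simp
    rw [hG, SchwartzMap.derivCLM_apply, this, deriv_comp_add_const]
  have hGa : IntegrableOn (fun w => G w * w ^ α) (Ioi 0) := by
    have := aux_schwartz_int G (s := α + 1) (by linarith)
    simp only [add_sub_cancel_right] at this
    exact this.congr_fun (fun t _ => mul_comm _ _) measurableSet_Ioi
  have hGi : IntegrableOn (fun w => G w) (Ioi 0) := G.integrable.integrableOn
  have hGI : ∫ w in Ioi (0:ℝ), G w = - f x := by
    have := integral_Ioi_of_hasDerivAt_of_tendsto' (a := (0:ℝ))
      (f := f.compSubConstCLM ℝ (-x)) (f' := G) (m := 0)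
      (fun t _ => (f.compSubConstCLM ℝ (-x)).hasDerivAt t) hGi
      ((f.compSubConstCLM ℝ (-x)).tendsto_cocompact.mono_left atTop_le_cocompact)
    rw [this]; simp
  have key : ∀ h ∈ Ioi (0:ℝ), (Weyl α (fun y => f y) (h + x) - Weyl α (fun y => f y) x)
      / h ^ (1 + α) = (1 / (α * Real.Gamma α)) * ∫ w in Ioi (0:ℝ), G w * auxK α w h := by
    intro h hh
    have hh' : (0:ℝ) < h := hh
    have w0 := aux_Weyl α hα f x 0 le_rfl
    rw [zero_add] at w0
    rw [aux_Weyl α hα f x h hh'.le, w0]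
    simp only [← hGd]
    have ib : IntegrableOn (fun w => G w * (max (w - h) 0) ^ α) (Ioi 0) := by
      refine Integrable.mono hGa ?_ ?_
      · exact (G.continuous.measurable.mul (by fun_prop)).aestronglyMeasurable
      · refine ae_restrict_of_forall_mem measurableSet_Ioi fun w hw => ?_
        have hw' : (0:ℝ) < w := hw
        rw [norm_mul, norm_mul, Real.norm_of_nonneg (Real.rpow_nonneg hw'.le _),
          Real.norm_of_nonneg (Real.rpow_nonneg (le_max_right _ _) _)]
        refine mul_le_mul_of_nonneg_left ?_ (norm_nonneg _)
        exact Real.rpow_le_rpow (le_max_right _ _) (max_le (by linarith) hw'.le) hα.le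
    have e0 : ∫ w in Ioi (0:ℝ), G w * (max (w - 0) 0) ^ α = ∫ w in Ioi (0:ℝ), G w * w ^ α := by
      refine setIntegral_congr_fun measurableSet_Ioi fun w hw => ?_
      have hw' : (0:ℝ) < w := hw
      simp only [sub_zero, max_eq_left hw'.le]
    have e1 : ∫ w in Ioi (0:ℝ), G w * auxK α w h = (∫ w in Ioi (0:ℝ), G w * w ^ α -
        G w * (max (w - h) 0) ^ α) / h ^ (1 + α) := by
      rw [← integral_div]
      congr 1; ext w; unfold auxK; ring
    rw [e0, e1, integral_sub hGa ib]
    have := (Real.Gamma_pos_of_pos hα).ne'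
    field_simp
    ring
  unfold Dright
  have h0 := aux_shift (fun t => (Weyl α (fun y => f y) t - Weyl α (fun y => f y) x)
    / (t - x) ^ (1 + α)) x 0
  rw [zero_add] at h0
  rw [h0]
  simp only [add_sub_cancel_right]
  rw [setIntegral_congr_fun measurableSet_Ioi key, integral_const_mul]
  have hint : Integrable (Function.uncurry fun w h => G w * auxK α w h)
      ((volume.restrict (Ioi 0)).prod (volume.restrict (Ioi (0:ℝ)))) := by
    rw [integrable_prod_iff]
    · constructor
      · refine ae_restrict_of_forall_mem measurableSet_Ioi fun w hw => ?_
        exact (auxK_int hα hα1 hw).1.const_mul (G w)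
      · have : IntegrableOn (fun w => ‖G w‖ * (Real.Gamma (1 - α) * Real.Gamma α)) (Ioi 0) :=
          hGi.norm.mul_const _
        refine IntegrableOn.congr_fun this ?_ measurableSet_Ioi
        intro w hw
        have hw' : (0:ℝ) < w := hw
        simp only [Function.uncurry]
        rw [← (auxK_int hα hα1 hw).2, ← integral_const_mul]
        refine setIntegral_congr_fun measurableSet_Ioi fun h hh => ?_
        simp only [norm_mul]
        rw [Real.norm_of_nonneg (auxK_nonneg hα hw'.le hh)]
    · have := (G.continuous.measurable.comp measurable_fst).mul (auxK_meas α)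
      exact Measurable.aestronglyMeasurable this
  rw [← integral_integral_swap hint]
  have : ∫ w in Ioi (0:ℝ), ∫ h in Ioi (0:ℝ), G w * auxK α w h
      = ∫ w in Ioi (0:ℝ), G w * (Real.Gamma (1 - α) * Real.Gamma α) := by
    refine setIntegral_congr_fun measurableSet_Ioi fun w hw => ?_
    simp only [integral_const_mul]
    rw [(auxK_int hα hα1 hw).2]
  rw [this, integral_mul_const, hGI]
  have g1 : Real.Gamma (1 - α) = -α * Real.Gamma (-α) := by
    rw [← Real.Gamma_add_one (by linarith : -α ≠ 0)]
    ring_nf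
  have g2 := (Real.Gamma_pos_of_pos hα).ne'
  have g3 : Real.Gamma (-α) ≠ 0 := by
    intro h
    rw [h, mul_zero] at g1
    exact (Real.Gamma_pos_of_pos (by linarith : 0 < 1 - α)).ne' g1
  rw [g1]
  field_simp
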